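/- arXiv:1906.09368 — 5 statements merged into one kernel-verified Lean document; each statement's English description precedes it below -/
import Mathlib

section
/- For every automorphism θ of the free group F₂ on two generators a, b, there exists an element h ∈ F₂ such that θ²([a,b]) = h⁻¹·[a,b]·h, where θ² = θ ∘ θ and [a,b] = a⁻¹b⁻¹ab. -/
/-- The free group on two generators. -/
abbrev F₂ : Type := FreeGroup (Fin 2)

/-- The two generators of `F₂`. -/
def genA : F₂ := FreeGroup.of 0
def genB : F₂ := FreeGroup.of 1

/-!
Fix two generators of the free group and apply Nielsen moves, together with simultaneous
conjugations, to the pair until its total length is minimal. In a minimal pair neither element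
loses more than half of its length when multiplied by the other, and if `x` were cancelled in equal
halves between two neighbours, say `x = p * q` while `y` begins with `p` and ends with `q`, then
conjugating by `p` and multiplying would shorten the pair. So every letter of a word in the pair
survives cancellation, hence the free generators are themselves, up to sign and order, the minimal
pair. All moves preserve the commutator up to conjugation and inversion, and the possible inversion
disappears when the automorphism is applied twice.
-/

open FreeGroup

open scoped commutatorElement

/-! ### Gromov products in a free group -/

section CommonPrefix

variable {β : Type*} [DecidableEq β]

/-- The length of the longest common prefix of two lists. -/
def commonPrefixLength : List β → List β → ℕ
  | s :: u, t :: v => if s = t then commonPrefixLength u v + 1 else 0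
  | _, _ => 0

lemma min_commonPrefixLength_le (u v w : List β) :
    min (commonPrefixLength u v) (commonPrefixLength v w) ≤ commonPrefixLength u w := by
  induction u generalizing v w with
  | nil => simp [commonPrefixLength]
  | cons s u ih =>
    rcases v with _ | ⟨t, v⟩
    · simp [commonPrefixLength]
    rcases w with _ | ⟨r, w⟩
    · simp [commonPrefixLength]
    have := ih v w
    grind [commonPrefixLength]

end CommonPrefix

section GromovProduct

variable {α : Type*}

lemma isReduced_invRev_append {s t : α × Bool} {u v : List (α × Bool)} (hst : s ≠ t)
    (hu : IsReduced (s :: u)) (hv : IsReduced (t :: v)) :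
    IsReduced (invRev (s :: u) ++ t :: v) := by
  classical
  have hu' : IsReduced (invRev (s :: u)) := by
    rw [isReduced_iff_reduce_eq, reduce_invRev, hu.reduce_eq]
  refine List.isChain_append.2 ⟨hu', hv, ?_⟩
  obtain ⟨i, b⟩ := s
  obtain ⟨j, c⟩ := t
  cases b <;> cases c <;> simp_all [invRev]

variable [DecidableEq α]

lemma norm_mk_of_isReduced {L : List (α × Bool)} (hL : IsReduced L) :
    (mk L).norm = L.length := by
  rw [FreeGroup.norm, toWord_mk, hL.reduce_eq]

lemma norm_inv_mk_mul_mk {u v : List (α × Bool)} (hu : IsReduced u) (hv : IsReduced v) :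
    ((mk u)⁻¹ * mk v).norm + 2 * commonPrefixLength u v = u.length + v.length := by
  induction u generalizing v with
  | nil => simp [commonPrefixLength, ← one_eq_mk, norm_mk_of_isReduced hv]
  | cons s u ih =>
    rcases v with _ | ⟨t, v⟩
    · simp [commonPrefixLength, ← one_eq_mk, -inv_mk, norm_mk_of_isReduced hu]
    by_cases hst : s = t
    · subst hst
      have hcancel : (mk (s :: u))⁻¹ * mk (s :: v) = (mk u)⁻¹ * mk v := by
        rw [← List.singleton_append (l := u), ← List.singleton_append (l := v), ← mul_mk, ← mul_mk]
        group
      have := ih (hu.infix (List.suffix_cons s u).isInfix) (hv.infix (List.suffix_cons s v).isInfix)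
      rw [hcancel]
      simp only [commonPrefixLength, if_true, List.length_cons]
      omega
    · rw [inv_mk, mul_mk, norm_mk_of_isReduced (isReduced_invRev_append hst hu hv)]
      simp [commonPrefixLength, hst]

/-- The Gromov product of `g` and `h` based at `1` in the Cayley tree of the free group, that is,
the length of the longest common prefix of their reduced words. -/
def gromovProduct (g h : FreeGroup α) : ℕ := commonPrefixLength g.toWord h.toWord

lemma min_gromovProduct_le (g h k : FreeGroup α) :
    min (gromovProduct g h) (gromovProduct h k) ≤ gromovProduct g k :=
  min_commonPrefixLength_le _ _ _

lemma norm_inv_mul_add_two_mul_gromovProduct (g h : FreeGroup α) :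
    (g⁻¹ * h).norm + 2 * gromovProduct g h = g.norm + h.norm := by
  have hwords := norm_inv_mk_mul_mk (isReduced_toWord (x := g)) (isReduced_toWord (x := h))
  rwa [mk_toWord, mk_toWord] at hwords

lemma gromovProduct_comm (g h : FreeGroup α) : gromovProduct g h = gromovProduct h g := by
  have hgh := norm_inv_mul_add_two_mul_gromovProduct g h
  have hhg := norm_inv_mul_add_two_mul_gromovProduct h g
  have hnorm : (g⁻¹ * h).norm = (h⁻¹ * g).norm := by
    rw [← norm_inv_eq, mul_inv_rev, inv_inv]
  omega

lemma gromovProduct_mul_add_gromovProduct_inv (g h : FreeGroup α) :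
    gromovProduct g (g * h) + gromovProduct g⁻¹ h = g.norm := by
  have hleft := norm_inv_mul_add_two_mul_gromovProduct g (g * h)
  have hright := norm_inv_mul_add_two_mul_gromovProduct g⁻¹ h
  rw [inv_mul_cancel_left] at hleft
  rw [inv_inv, norm_inv_eq] at hright
  omega

lemma gromovProduct_le_norm_left (g h : FreeGroup α) : gromovProduct g h ≤ g.norm := by
  have hsum := gromovProduct_mul_add_gromovProduct_inv g (g⁻¹ * h)
  rw [mul_inv_cancel_left] at hsum
  omega

lemma norm_pow_succ (x : FreeGroup α) (n : ℕ) :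
    (x ^ (n + 1)).norm = 2 * (reduceCyclically.conjugator x.toWord).length +
      (n + 1) * (reduceCyclically x.toWord).length := by
  rw [FreeGroup.norm, toWord_pow,
    reduceCyclically.reduce_flatten_replicate_succ isReduced_toWord]
  simp only [List.length_append, List.length_flatten, List.map_replicate, List.sum_replicate,
    invRev_length, smul_eq_mul]
  omega

lemma reduceCyclically_toWord_ne_nil {x : FreeGroup α} (hx : x ≠ 1) :
    reduceCyclically x.toWord ≠ [] := by
  intro hnil
  have hword := reduceCyclically.conj_conjugator_reduceCyclically x.toWord
  rw [hnil, List.append_nil] at hword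
  apply hx
  rw [← mk_toWord (x := x), ← hword, ← mul_mk, ← inv_mk, mul_inv_cancel]

lemma norm_lt_norm_sq {x : FreeGroup α} (hx : x ≠ 1) : x.norm < (x ^ 2).norm := by
  have hpos := List.length_pos_iff.2 (reduceCyclically_toWord_ne_nil hx)
  have hx1 := norm_pow_succ x 0
  have hx2 : (x ^ 2).norm = _ := norm_pow_succ x 1
  rw [zero_add, pow_one] at hx1
  omega

lemma two_mul_gromovProduct_self_inv_lt {x : FreeGroup α} (hx : x ≠ 1) :
    2 * gromovProduct x x⁻¹ < x.norm := by
  have hprod := norm_inv_mul_add_two_mul_gromovProduct x x⁻¹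
  have hsq := norm_lt_norm_sq hx
  rw [← mul_inv_rev, ← sq, norm_inv_eq, norm_inv_eq] at hprod
  omega

lemma exists_eq_mul_of_le_norm {x : FreeGroup α} {m : ℕ} (hm : m ≤ x.norm) :
    ∃ p q : FreeGroup α, x = p * q ∧ p.norm = m ∧ p.norm + q.norm = x.norm := by
  have hred : IsReduced x.toWord := isReduced_toWord
  have hp := norm_mk_of_isReduced (hred.infix (List.take_prefix m _).isInfix)
  have hq := norm_mk_of_isReduced (hred.infix (List.drop_suffix m _).isInfix)
  rw [List.length_take] at hp
  rw [List.length_drop] at hq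
  refine ⟨mk (x.toWord.take m), mk (x.toWord.drop m), ?_, ?_, ?_⟩
  · rw [mul_mk, List.take_append_drop, mk_toWord]
  all_goals
    unfold FreeGroup.norm at *
    omega

lemma norm_add_norm_inv_mul_le {p q y : FreeGroup α} (hpq : p.norm + q.norm = (p * q).norm)
    (hy : p.norm ≤ gromovProduct (p * q) y) : p.norm + (p⁻¹ * y).norm ≤ y.norm := by
  have hprefix := norm_inv_mul_add_two_mul_gromovProduct p (p * q)
  have hyp := min_gromovProduct_le p (p * q) y
  have hnorm := norm_inv_mul_add_two_mul_gromovProduct p y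
  rw [inv_mul_cancel_left] at hprefix
  omega

end GromovProduct

/-! ### Nielsen reduced families -/

section SignedLetter

variable {ι G : Type*} [Group G]

/-- The element `x i` or its inverse, according to the sign carried by the letter `(i, b)`; letters
are encoded as in `FreeGroup.mk`, so that `(i, true)` stands for `x i`. -/
def signedLetter (x : ι → G) (s : ι × Bool) : G := bif s.2 then x s.1 else (x s.1)⁻¹

lemma signedLetter_not (x : ι → G) (s : ι × Bool) :
    signedLetter x (s.1, !s.2) = (signedLetter x s)⁻¹ := by
  obtain ⟨i, b⟩ := s
  cases b <;> simp [signedLetter]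

lemma lift_mk_cons (x : ι → G) (s : ι × Bool) (L : List (ι × Bool)) :
    lift x (mk (s :: L)) = signedLetter x s * lift x (mk L) := by
  simp only [lift_mk, List.map_cons, List.prod_cons, signedLetter]

lemma commute_signedLetter (x : ι → G) {s t : ι × Bool} (hst : s.1 = t.1) :
    Commute (signedLetter x s) (signedLetter x t) := by
  obtain ⟨i, b⟩ := s
  obtain ⟨j, c⟩ := t
  obtain rfl : i = j := hst
  cases b <;> cases c <;> simp [signedLetter]

lemma fst_ne_or_eq_not {s t : ι × Bool} (hst : s ≠ t) : s.1 ≠ t.1 ∨ s = (t.1, !t.2) := by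
  by_cases hfst : s.1 = t.1
  · exact .inr (Prod.ext hfst (Bool.eq_not.2 fun hsnd => hst (Prod.ext hfst hsnd)))
  · exact .inl hfst

end SignedLetter

section NielsenReduced

variable {α : Type*} [DecidableEq α] {ι : Type*} {x : ι → FreeGroup α}

/-- Nielsen reduced families, with Nielsen's conditions `‖st‖ ≥ ‖s‖, ‖t‖` and
`‖stu‖ > ‖s‖ - ‖t‖ + ‖u‖` on products of signed letters written in terms of Gromov products: at
most half of a letter is cancelled by a neighbour, and no letter is cancelled by its two
neighbours together. -/
structure IsNielsenReduced (x : ι → FreeGroup α) : Prop where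
  two_mul_gromovProduct_le : ∀ s t : ι × Bool, s ≠ t →
    2 * gromovProduct (signedLetter x s) (signedLetter x t) ≤ (signedLetter x t).norm
  gromovProduct_add_lt : ∀ s t u : ι × Bool, s ≠ t → u ≠ (t.1, !t.2) →
    gromovProduct (signedLetter x s) (signedLetter x t) +
      gromovProduct (signedLetter x t)⁻¹ (signedLetter x u) < (signedLetter x t).norm

namespace IsNielsenReduced

lemma norm_signedLetter_pos (hx : IsNielsenReduced x) (t : ι × Bool) :
    0 < (signedLetter x t).norm :=
  (Nat.zero_le _).trans_lt
    (hx.gromovProduct_add_lt (t.1, !t.2) t t (by simp [Prod.ext_iff]) (by simp [Prod.ext_iff]))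

lemma gromovProduct_lift_le_and_add_length_le (hx : IsNielsenReduced x) {s t : ι × Bool}
    {L : List (ι × Bool)} (hL : IsReduced (t :: L)) (hst : s ≠ t) :
    gromovProduct (signedLetter x s) (lift x (FreeGroup.mk (t :: L))) ≤
        gromovProduct (signedLetter x s) (signedLetter x t) ∧
      gromovProduct (signedLetter x s) (signedLetter x t) + (L.length + 1) ≤
        (lift x (FreeGroup.mk (t :: L))).norm := by
  induction L generalizing s t with
  | nil =>
    have hhalf := hx.two_mul_gromovProduct_le s t hst
    have hpos := hx.norm_signedLetter_pos t
    rw [lift_mk_cons, ← one_eq_mk, _root_.map_one, mul_one, List.length_nil]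
    omega
  | cons u L ih =>
    have hut : u ≠ (t.1, !t.2) := by
      rintro rfl
      simpa using (List.isChain_cons_cons.1 hL).1
    obtain ⟨hle, hlength⟩ := ih (hL.infix (List.suffix_cons t _).isInfix) hut.symm
    rw [signedLetter_not] at hle hlength
    rw [lift_mk_cons, List.length_cons]
    set a := signedLetter x s
    set b := signedLetter x t
    set w := lift x (FreeGroup.mk (u :: L))
    have hnorm := norm_inv_mul_add_two_mul_gromovProduct b⁻¹ w
    rw [inv_inv, norm_inv_eq] at hnorm
    have hremains : gromovProduct a b + gromovProduct b⁻¹ (signedLetter x u) < b.norm :=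
      hx.gromovProduct_add_lt s t u hst hut
    -- `b * w` follows `b` beyond the point where `a` and `b` part.
    have hbranch : gromovProduct a b < gromovProduct b (b * w) := by
      have := gromovProduct_mul_add_gromovProduct_inv b w
      omega
    have hprod := min_gromovProduct_le a (b * w) b
    rw [gromovProduct_comm (b * w) b] at hprod
    constructor <;> omega

lemma norm_le_norm_lift [DecidableEq ι] (hx : IsNielsenReduced x) (w : FreeGroup ι) :
    w.norm ≤ (lift x w).norm := by
  rcases hword : w.toWord with _ | ⟨t, L⟩
  · simp [toWord_eq_nil_iff.1 hword]
  have hred : IsReduced (t :: L) := hword ▸ isReduced_toWord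
  have ht : (t.1, !t.2) ≠ t := by simp [Prod.ext_iff]
  have hlength := (hx.gromovProduct_lift_le_and_add_length_le hred ht).2
  rw [← hword, mk_toWord] at hlength
  rw [FreeGroup.norm, hword, List.length_cons]
  omega

lemma exists_signedLetter_eq (hx : IsNielsenReduced x) {g : FreeGroup α}
    (hg : g ∈ (lift x).range) (hnorm : g.norm = 1) : ∃ s, signedLetter x s = g := by
  classical
  obtain ⟨w, rfl⟩ := hg
  have hw : w.norm ≠ 0 := fun h => by simp [norm_eq_zero.1 h] at hnorm
  have hle := hx.norm_le_norm_lift w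
  obtain ⟨s, hs⟩ : ∃ s, w.toWord = [s] := by
    rw [← List.length_eq_one_iff]
    unfold FreeGroup.norm at *
    omega
  refine ⟨s, ?_⟩
  rw [← mk_toWord (x := w), hs, lift_mk_cons, ← one_eq_mk, _root_.map_one, mul_one]

end IsNielsenReduced

end NielsenReduced

/-! ### Nielsen equivalence of pairs -/

section IsConjOrInv

variable {G : Type*} [Group G]

/-- `h` is conjugate to `g` or to its inverse. -/
def IsConjOrInv (g h : G) : Prop := IsConj g h ∨ IsConj g⁻¹ h

lemma isConj_inv_inv {g h : G} (hgh : IsConj g h) : IsConj g⁻¹ h⁻¹ := by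
  obtain ⟨c, rfl⟩ := isConj_iff.1 hgh
  exact isConj_iff.2 ⟨c, conj_inv.symm⟩

lemma IsConjOrInv.symm {g h : G} (hgh : IsConjOrInv g h) : IsConjOrInv h g :=
  hgh.imp IsConj.symm fun hinv => inv_inv g ▸ (isConj_inv_inv hinv).symm

lemma IsConjOrInv.trans {g h k : G} (hgh : IsConjOrInv g h) (hhk : IsConjOrInv h k) :
    IsConjOrInv g k := by
  rcases hgh with hgh | hgh <;> rcases hhk with hhk | hhk
  · exact .inl (hgh.trans hhk)
  · exact .inr ((isConj_inv_inv hgh).trans hhk)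
  · exact .inr (hgh.trans hhk)
  · exact .inl (inv_inv g ▸ (isConj_inv_inv hgh).trans hhk)

lemma IsConjOrInv.isConj_map_map {φ : G →* G} {g : G} (h : IsConjOrInv g (φ g)) :
    IsConj g (φ (φ g)) := by
  rcases h with h | h
  · exact h.trans (φ.map_isConj h)
  · have hinv := isConj_inv_inv h
    rw [inv_inv, ← _root_.map_inv] at hinv
    exact hinv.trans (φ.map_isConj h)

end IsConjOrInv

section NielsenEquiv

variable {G : Type*} [Group G]

/-- The elementary Nielsen moves on pairs, together with simultaneous conjugation. -/
inductive NielsenMove : G × G → G × G → Prop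
  | swap (x y : G) : NielsenMove (x, y) (y, x)
  | inv (x y : G) : NielsenMove (x, y) (x⁻¹, y)
  | mul (x y : G) : NielsenMove (x, y) (x, x * y)
  | conj (g x y : G) : NielsenMove (x, y) (g * x * g⁻¹, g * y * g⁻¹)

/-- Nielsen equivalence of pairs up to simultaneous conjugation. Each elementary move is undone by
a sequence of moves, so it is enough to take the reflexive transitive closure. -/
abbrev NielsenEquiv : G × G → G × G → Prop := Relation.ReflTransGen NielsenMove

lemma NielsenMove.isConjOrInv_commutator {p q : G × G} (h : NielsenMove p q) :
    IsConjOrInv ⁅p.1, p.2⁆ ⁅q.1, q.2⁆ := by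
  cases h with
  | swap x y => exact .inr (by rw [commutatorElement_inv])
  | inv x y =>
    refine .inr (isConj_iff.2 ⟨x⁻¹, ?_⟩)
    rw [commutatorElement_inv, commutatorElement_inv_left, inv_inv]
  | mul x y => exact .inl (isConj_iff.2 ⟨x, by simp only [commutatorElement_def]; group⟩)
  | conj g x y => exact .inl (isConj_iff.2 ⟨g, by simp only [commutatorElement_def]; group⟩)

lemma NielsenMove.closure_eq_top {p q : G × G} (h : NielsenMove p q)
    (hp : Subgroup.closure {p.1, p.2} = ⊤) : Subgroup.closure {q.1, q.2} = ⊤ := by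
  cases h with
  | swap x y => rwa [Set.pair_comm]
  | inv x y =>
    rw [eq_top_iff, ← hp, Subgroup.closure_le, Set.pair_subset_iff]
    have hx : x⁻¹ ∈ Subgroup.closure {x⁻¹, y} := Subgroup.subset_closure (by simp)
    exact ⟨inv_mem_iff.1 hx, Subgroup.subset_closure (by simp)⟩
  | mul x y =>
    rw [eq_top_iff, ← hp, Subgroup.closure_le, Set.pair_subset_iff]
    have hx : x ∈ Subgroup.closure {x, x * y} := Subgroup.subset_closure (by simp)
    have hxy : x * y ∈ Subgroup.closure {x, x * y} := Subgroup.subset_closure (by simp)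
    exact ⟨hx, (Subgroup.mul_mem_cancel_left _ hx).1 hxy⟩
  | conj g x y =>
    have hmap := MonoidHom.map_closure (MulAut.conj g).toMonoidHom {x, y}
    rw [hp, Subgroup.map_top_of_surjective _ (MulAut.conj g).surjective, Set.image_pair] at hmap
    exact hmap.symm

namespace NielsenEquiv

lemma isConjOrInv_commutator {p q : G × G} (h : NielsenEquiv p q) :
    IsConjOrInv ⁅p.1, p.2⁆ ⁅q.1, q.2⁆ := by
  induction h with
  | refl => exact .inl (.refl _)
  | tail _ hmove ih => exact ih.trans hmove.isConjOrInv_commutator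

lemma closure_eq_top {p q : G × G} (h : NielsenEquiv p q)
    (hp : Subgroup.closure {p.1, p.2} = ⊤) : Subgroup.closure {q.1, q.2} = ⊤ := by
  induction h with
  | refl => exact hp
  | tail _ hmove ih => exact hmove.closure_eq_top ih

lemma commute {p q : G × G} (h : NielsenEquiv p q) (hq : Commute q.1 q.2) :
    Commute p.1 p.2 := by
  rw [← commutatorElement_eq_one_iff_commute] at hq ⊢
  have hconj := h.isConjOrInv_commutator
  rw [hq] at hconj
  simpa only [IsConjOrInv, isConj_one_left, inv_eq_one, or_self] using hconj

lemma inv_left (x y : G) : NielsenEquiv (x, y) (x⁻¹, y) := .single (.inv x y)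

lemma inv_right (x y : G) : NielsenEquiv (x, y) (x, y⁻¹) :=
  ((Relation.ReflTransGen.single (.swap x y)).tail (.inv y x)).tail (.swap y⁻¹ x)

lemma signedLetter_pair (x y : G) {s t : Fin 2 × Bool} (hst : s.1 ≠ t.1) :
    NielsenEquiv (x, y) (signedLetter ![x, y] s, signedLetter ![x, y] t) := by
  have hsign (u v : G) (b c : Bool) :
      NielsenEquiv (u, v) (bif b then u else u⁻¹, bif c then v else v⁻¹) := by
    cases b <;> cases c
    exacts [(inv_left u v).trans (inv_right _ v), inv_left u v, inv_right u v, .refl]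
  obtain ⟨i, b⟩ := s
  obtain ⟨j, c⟩ := t
  obtain ⟨rfl, rfl⟩ | ⟨rfl, rfl⟩ : i = 0 ∧ j = 1 ∨ i = 1 ∧ j = 0 := by
    dsimp only at hst
    omega
  · exact hsign x y b c
  · exact (Relation.ReflTransGen.single (.swap x y)).trans (hsign y x b c)

end NielsenEquiv

end NielsenEquiv

/-! ### Minimal pairs are Nielsen reduced -/

section MinimalPair

variable {α : Type*} [DecidableEq α]

/-- The total length of a pair. -/
def pairNorm (p : FreeGroup α × FreeGroup α) : ℕ := p.1.norm + p.2.norm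

/-- A noncommuting pair of least total length in its Nielsen class. -/
structure IsMinimalPair (p : FreeGroup α × FreeGroup α) : Prop where
  not_commute : ¬ Commute p.1 p.2
  pairNorm_le : ∀ q, NielsenEquiv p q → pairNorm p ≤ pairNorm q

lemma exists_nielsenEquiv_isMinimalPair {p : FreeGroup α × FreeGroup α}
    (hp : ¬ Commute p.1 p.2) : ∃ q, NielsenEquiv p q ∧ IsMinimalPair q := by
  obtain ⟨q, hpq, hmin⟩ := (measure pairNorm).wf.has_min {q | NielsenEquiv p q} ⟨p, .refl⟩
  exact ⟨q, hpq, fun hq => hp (hpq.commute hq),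
    fun r hqr => not_lt.1 (hmin r (Relation.ReflTransGen.trans hpq hqr))⟩

namespace IsMinimalPair

variable {x y : FreeGroup α}

lemma of_nielsenEquiv {p q : FreeGroup α × FreeGroup α} (hp : IsMinimalPair p)
    (hpq : NielsenEquiv p q) (hnorm : pairNorm q = pairNorm p) : IsMinimalPair q :=
  ⟨fun hq => hp.not_commute (hpq.commute hq),
    fun r hqr => hnorm ▸ hp.pairNorm_le r (Relation.ReflTransGen.trans hpq hqr)⟩

lemma swap (h : IsMinimalPair (x, y)) : IsMinimalPair (y, x) :=
  h.of_nielsenEquiv (.single (.swap x y)) (add_comm _ _)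

lemma signedLetter_pair (h : IsMinimalPair (x, y)) {s t : Fin 2 × Bool} (hst : s.1 ≠ t.1) :
    IsMinimalPair (signedLetter ![x, y] s, signedLetter ![x, y] t) := by
  refine h.of_nielsenEquiv (.signedLetter_pair x y hst) ?_
  obtain ⟨i, b⟩ := s
  obtain ⟨j, c⟩ := t
  obtain ⟨rfl, rfl⟩ | ⟨rfl, rfl⟩ : i = 0 ∧ j = 1 ∨ i = 1 ∧ j = 0 := by
    dsimp only at hst
    omega
  all_goals cases b <;> cases c <;> simp [signedLetter, pairNorm, add_comm]

lemma inv_left (h : IsMinimalPair (x, y)) : IsMinimalPair (x⁻¹, y) :=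
  h.of_nielsenEquiv (.inv_left x y) (by simp [pairNorm])

lemma inv_right (h : IsMinimalPair (x, y)) : IsMinimalPair (x, y⁻¹) := h.swap.inv_left.swap

lemma left_ne_one (h : IsMinimalPair (x, y)) : x ≠ 1 := by
  rintro rfl
  exact h.not_commute (Commute.one_left y)

lemma signedLetter_ne_one (h : IsMinimalPair (x, y)) (s : Fin 2 × Bool) :
    signedLetter ![x, y] s ≠ 1 :=
  (h.signedLetter_pair (s := s) (t := (s.1 + 1, true)) (by simp)).left_ne_one

lemma two_mul_gromovProduct_le_left (h : IsMinimalPair (x, y)) :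
    2 * gromovProduct x y ≤ x.norm := by
  have hmin := h.pairNorm_le (x⁻¹, x⁻¹ * y) ((NielsenEquiv.inv_left x y).tail (.mul _ _))
  have hnorm := norm_inv_mul_add_two_mul_gromovProduct x y
  simp only [pairNorm, norm_inv_eq] at hmin
  omega

lemma two_mul_gromovProduct_le_right (h : IsMinimalPair (x, y)) :
    2 * gromovProduct x y ≤ y.norm :=
  gromovProduct_comm x y ▸ h.swap.two_mul_gromovProduct_le_left

lemma norm_le_norm_inv_mul_mul_inv {p q : FreeGroup α} (h : IsMinimalPair (p * q, y))
    (hpq : p.norm + q.norm = (p * q).norm) : y.norm ≤ (p⁻¹ * y * q⁻¹).norm := by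
  have hequiv : NielsenEquiv (p * q, y) (q * p, (p⁻¹ * y * q⁻¹)⁻¹) := by
    have hconj := (NielsenEquiv.inv_right (p * q) y).tail (.conj p⁻¹ _ _)
    convert hconj.tail (.mul _ _) using 2 <;> group
  have hmin := h.pairNorm_le _ hequiv
  have hqp := norm_mul_le q p
  simp only [pairNorm, norm_inv_eq] at hmin
  omega

lemma gromovProduct_add_gromovProduct_inv_lt (h : IsMinimalPair (x, y)) :
    gromovProduct x y + gromovProduct x⁻¹ y < x.norm := by
  have hpos := h.two_mul_gromovProduct_le_left
  have hneg := h.inv_left.two_mul_gromovProduct_le_left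
  have hself := two_mul_gromovProduct_self_inv_lt h.left_ne_one
  have hyp := min_gromovProduct_le x y x⁻¹
  rw [norm_inv_eq] at hneg
  rw [gromovProduct_comm y] at hyp
  omega

lemma gromovProduct_add_gromovProduct_inv_inv_lt (h : IsMinimalPair (x, y)) :
    gromovProduct x y + gromovProduct x⁻¹ y⁻¹ < x.norm := by
  have hleft := h.two_mul_gromovProduct_le_left
  have hright := h.inv_left.inv_right.two_mul_gromovProduct_le_left
  rw [norm_inv_eq] at hright
  by_contra! hge
  obtain ⟨p, q, rfl, hp, hpq⟩ : ∃ p q, x = p * q ∧ p.norm = gromovProduct x y ∧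
      p.norm + q.norm = x.norm := exists_eq_mul_of_le_norm (by omega)
  have hy := h.two_mul_gromovProduct_le_right
  have hprefix : p.norm + (p⁻¹ * y).norm ≤ y.norm := norm_add_norm_inv_mul_le hpq hp.le
  -- Since `‖p‖ + ‖q‖ ≤ ‖y‖`, the suffix `q` of `y` does not meet its prefix `p`.
  have hsuffix : q.norm ≤ gromovProduct (p * q)⁻¹ (y⁻¹ * p) := by
    have hcommon := gromovProduct_mul_add_gromovProduct_inv y⁻¹ p
    have hyp := min_gromovProduct_le (p * q)⁻¹ y⁻¹ (y⁻¹ * p)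
    have hyp_le := gromovProduct_le_norm_left p y
    rw [inv_inv, norm_inv_eq, gromovProduct_comm y] at hcommon
    omega
  have hshort : q.norm + (p⁻¹ * y * q⁻¹).norm ≤ (p⁻¹ * y).norm := by
    rw [mul_inv_rev] at hsuffix
    have := norm_add_norm_inv_mul_le (p := q⁻¹) (q := p⁻¹) (y := y⁻¹ * p)
      (by rw [← mul_inv_rev, norm_inv_eq, norm_inv_eq, norm_inv_eq]; omega)
      (by rwa [norm_inv_eq])
    rwa [← norm_inv_eq (x := p⁻¹ * y * q⁻¹), ← norm_inv_eq (x := p⁻¹ * y), mul_inv_rev,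
      mul_inv_rev, inv_inv p, ← norm_inv_eq (x := q)]
  have hlong := h.norm_le_norm_inv_mul_mul_inv hpq
  have hne := norm_eq_zero.not.2 h.left_ne_one
  omega

lemma two_mul_gromovProduct_signedLetter_le (h : IsMinimalPair (x, y)) {s t : Fin 2 × Bool}
    (hst : s ≠ t) :
    2 * gromovProduct (signedLetter ![x, y] s) (signedLetter ![x, y] t) ≤
      (signedLetter ![x, y] t).norm := by
  rcases fst_ne_or_eq_not hst with hfst | rfl
  · exact (h.signedLetter_pair hfst).two_mul_gromovProduct_le_right
  · rw [signedLetter_not, gromovProduct_comm]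
    exact (two_mul_gromovProduct_self_inv_lt (h.signedLetter_ne_one t)).le

lemma isNielsenReduced (h : IsMinimalPair (x, y)) : IsNielsenReduced ![x, y] where
  two_mul_gromovProduct_le _ _ := h.two_mul_gromovProduct_signedLetter_le
  gromovProduct_add_lt s t u hst hut := by
    have hs := h.two_mul_gromovProduct_signedLetter_le hst
    have hu := h.two_mul_gromovProduct_signedLetter_le hut
    have hself := two_mul_gromovProduct_self_inv_lt (h.signedLetter_ne_one t)
    rw [signedLetter_not, norm_inv_eq, gromovProduct_comm] at hu
    rcases fst_ne_or_eq_not hst with hfst | rfl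
    · rcases fst_ne_or_eq_not hut with hut' | hut'
      · have hpair := h.signedLetter_pair hfst.symm
        rw [gromovProduct_comm]
        by_cases hus : u = s
        · exact hus ▸ hpair.gromovProduct_add_gromovProduct_inv_lt
        · have hu_eq : u = (s.1, !s.2) := (fst_ne_or_eq_not hus).resolve_left fun hne => by
            dsimp only at hut'
            omega
          rw [hu_eq, signedLetter_not]
          exact hpair.gromovProduct_add_gromovProduct_inv_inv_lt
      · obtain rfl : u = t := by simpa only [Bool.not_not] using hut'
        rw [gromovProduct_comm (signedLetter ![x, y] u)⁻¹]
        omega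
    · rw [signedLetter_not, gromovProduct_comm (signedLetter ![x, y] t)⁻¹ (signedLetter ![x, y] t)]
      omega

end IsMinimalPair

end MinimalPair

/-! ### Generating pairs of the free group of rank two -/

lemma commute_of_closure_pair_eq_top {G : Type*} [Group G] {x y : G}
    (h : Subgroup.closure {x, y} = ⊤) (hxy : Commute x y) (g k : G) : Commute g k := by
  have hcomm : IsMulCommutative (Subgroup.closure {x, y}) :=
    Subgroup.isMulCommutative_closure (by simp [hxy.eq])
  rw [h] at hcomm
  exact setLike_mul_comm (Subgroup.mem_top g) (Subgroup.mem_top k)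

lemma not_commute_genA_genB : ¬ Commute genA genB := by
  unfold Commute SemiconjBy
  decide

lemma closure_genA_genB : Subgroup.closure {genA, genB} = ⊤ := by
  rw [← closure_range_of (Fin 2)]
  congr 1
  ext g
  simp [genA, genB, eq_comm]

lemma not_commute_of_closure_eq_top {x y : F₂} (h : Subgroup.closure {x, y} = ⊤) :
    ¬ Commute x y := fun hxy =>
  not_commute_genA_genB (commute_of_closure_pair_eq_top h hxy genA genB)

theorem nielsenEquiv_genA_genB {x y : F₂} (h : Subgroup.closure {x, y} = ⊤) :
    NielsenEquiv (x, y) (genA, genB) := by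
  obtain ⟨⟨u, v⟩, hequiv, hmin⟩ :=
    exists_nielsenEquiv_isMinimalPair (p := (x, y)) (not_commute_of_closure_eq_top h)
  have hrange (g : F₂) : g ∈ (lift ![u, v]).range := by
    rw [range_lift_eq_closure, Matrix.range_cons_cons_empty, hequiv.closure_eq_top h]
    exact Subgroup.mem_top g
  obtain ⟨s, hs⟩ := hmin.isNielsenReduced.exists_signedLetter_eq (hrange genA) (norm_of 0)
  obtain ⟨t, ht⟩ := hmin.isNielsenReduced.exists_signedLetter_eq (hrange genB) (norm_of 1)
  have hst : s.1 ≠ t.1 := fun hfst =>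
    not_commute_genA_genB (hs ▸ ht ▸ commute_signedLetter ![u, v] hfst)
  exact hs ▸ ht ▸ Relation.ReflTransGen.trans hequiv (NielsenEquiv.signedLetter_pair u v hst)

lemma isConjOrInv_map_commutator {θ : F₂ →* F₂} (hθ : Function.Surjective θ) :
    IsConjOrInv ⁅genA, genB⁆ (θ ⁅genA, genB⁆) := by
  have hgen : Subgroup.closure {θ genA, θ genB} = ⊤ := by
    rw [← Set.image_pair, ← MonoidHom.map_closure, closure_genA_genB,
      Subgroup.map_top_of_surjective θ hθ]
  rw [map_commutatorElement]
  exact (nielsenEquiv_genA_genB hgen).isConjOrInv_commutator.symm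

theorem squared_aut_commutator_conjugate_general (θ : F₂ →* F₂) (hθ : Function.Surjective θ) :
    ∃ h : F₂,
      θ (θ (genA⁻¹ * genB⁻¹ * genA * genB)) =
        h⁻¹ * (genA⁻¹ * genB⁻¹ * genA * genB) * h := by
  have hsq : IsConj ⁅genA, genB⁆ (θ (θ ⁅genA, genB⁆)) :=
    (isConjOrInv_map_commutator hθ).isConj_map_map
  have hcomm : IsConj (genA⁻¹ * genB⁻¹ * genA * genB) ⁅genA, genB⁆ :=
    isConj_iff.2 ⟨genB * genA, by rw [commutatorElement_def]; group⟩
  have hmap := (θ.comp θ).map_isConj hcomm.symm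
  obtain ⟨c, hc⟩ := isConj_iff.1 (hcomm.trans (hsq.trans hmap))
  exact ⟨c⁻¹, by rw [inv_inv]; exact hc.symm⟩

/-- For every automorphism `θ` of the free group on two generators `a, b`, there is
`h ∈ F₂` with `θ²([a,b]) = h⁻¹ · [a,b] · h`, where `[a,b] = a⁻¹b⁻¹ab`. -/
theorem squared_aut_commutator_conjugate (θ : MulAut F₂) :
    ∃ h : F₂,
      θ (θ (genA⁻¹ * genB⁻¹ * genA * genB)) =
        h⁻¹ * (genA⁻¹ * genB⁻¹ * genA * genB) * h :=
  squared_aut_commutator_conjugate_general θ.toMonoidHom θ.surjective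
end

section
/- Let A ∈ SL(2,ℤ) and suppose A has at most linear growth, i.e. there exists a constant C > 0 such that ‖Aⁿ‖ ≤ C·n for all integers n ≥ 1, where ‖M‖ denotes the maximum of the absolute values of the entries of M. Then there exist an integer k > 0, an integer α, and B ∈ SL(2,ℤ) such that B⁻¹·Aᵏ·B is the matrix with rows (1, α) and (0, 1). -/
/-!
For a `2 × 2` matrix `M` of determinant one, Cayley–Hamilton gives
`tr Mⁿ⁺² = tr M · tr Mⁿ⁺¹ - tr Mⁿ`. If `|tr M| ≥ 3`, the traces of the powers therefore grow at
least like `2ⁿ`, which is incompatible with polynomial growth. Hence `A ∈ SL(2, ℤ)` of polynomial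
growth has `|tr A| ≤ 2`, and the same recurrence then yields `tr A¹² = 2`. Since
`det (A¹² - 1) = 2 - tr A¹²`, the matrix `A¹²` fixes a nonzero integral vector; divided by the gcd
of its coordinates, this vector is the first column of a change of basis in `SL(2, ℤ)`.
-/

open Matrix Filter
open scoped MatrixGroups

section CommRing

variable {R : Type*} [CommRing R]

theorem sq_eq_trace_smul_sub_det_smul_one (M : Matrix (Fin 2) (Fin 2) R) :
    M ^ 2 = M.trace • M - M.det • 1 := by
  nontriviality R
  have hCH := M.aeval_self_charpoly
  simp only [charpoly_fin_two, map_add, map_sub, map_mul, map_pow, Polynomial.aeval_X,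
    Polynomial.aeval_C, Algebra.algebraMap_eq_smul_one, smul_mul_assoc, one_mul] at hCH
  rwa [sub_add, sub_eq_zero] at hCH

theorem trace_pow_add_two_fin_two (M : Matrix (Fin 2) (Fin 2) R) (n : ℕ) :
    (M ^ (n + 2)).trace = M.trace * (M ^ (n + 1)).trace - M.det * (M ^ n).trace := by
  rw [pow_add, sq_eq_trace_smul_sub_det_smul_one, mul_sub, mul_smul_comm, mul_smul_comm, mul_one,
    ← pow_succ, trace_sub, trace_smul, trace_smul, smul_eq_mul, smul_eq_mul]

theorem det_sub_one_fin_two (M : Matrix (Fin 2) (Fin 2) R) : (M - 1).det = M.det - M.trace + 1 := by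
  simp only [det_fin_two, trace_fin_two, Matrix.sub_apply, one_apply_eq, one_apply_ne, ne_eq,
    zero_ne_one, one_ne_zero, not_false_eq_true, sub_zero]
  ring

theorem eq_unipotent_of_mulVec_single {M : Matrix (Fin 2) (Fin 2) R} (hdet : M.det = 1)
    (hM : M *ᵥ Pi.single 0 1 = Pi.single 0 1) : M = !![1, M 0 1; 0, 1] := by
  rw [mulVec_single_one] at hM
  have h₀₀ : M 0 0 = 1 := by simpa using congrFun hM 0
  have h₁₀ : M 1 0 = 0 := by simpa using congrFun hM 1
  have h₁₁ : M 1 1 = 1 := by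
    rwa [det_fin_two, h₀₀, h₁₀, one_mul, mul_zero, sub_zero] at hdet
  simpa only [h₀₀, h₁₀, h₁₁] using eta_fin_two M

theorem exists_conj_eq_unipotent_of_mulVec_eq {A : SL(2, R)} {v : Fin 2 → R}
    (hv : IsCoprime (v 0) (v 1)) (hA : (A : Matrix (Fin 2) (Fin 2) R) *ᵥ v = v) :
    ∃ (α : R) (B : SL(2, R)),
      ((B⁻¹ * A * B : SL(2, R)) : Matrix (Fin 2) (Fin 2) R) = !![1, α; 0, 1] := by
  obtain ⟨B, hB₀, hB₁⟩ := hv.exists_SL2_col 0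
  have hB : (B : Matrix (Fin 2) (Fin 2) R) *ᵥ Pi.single 0 1 = v := by
    rw [mulVec_single_one]
    ext i
    fin_cases i
    exacts [hB₀, hB₁]
  have hBinv : ((B⁻¹ : SL(2, R)) : Matrix (Fin 2) (Fin 2) R) *ᵥ v = Pi.single 0 1 := by
    rw [← hB, mulVec_mulVec, ← Matrix.SpecialLinearGroup.coe_mul, inv_mul_cancel,
      Matrix.SpecialLinearGroup.coe_one, one_mulVec]
  refine ⟨_, B, eq_unipotent_of_mulVec_single (Matrix.SpecialLinearGroup.det_coe _) ?_⟩
  rw [Matrix.SpecialLinearGroup.coe_mul, Matrix.SpecialLinearGroup.coe_mul, ← mulVec_mulVec,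
    ← mulVec_mulVec, hB, hA, hBinv]

end CommRing

section Bezout

variable {R : Type*} [CommRing R] [IsDomain R] [IsBezout R]

theorem exists_eq_smul_isCoprime {v : Fin 2 → R} (hv : v ≠ 0) :
    ∃ (g : R) (w : Fin 2 → R), g ≠ 0 ∧ IsCoprime (w 0) (w 1) ∧ v = g • w := by
  obtain ⟨p, hp⟩ := IsBezout.gcd_dvd_left (v 0) (v 1)
  obtain ⟨q, hq⟩ := IsBezout.gcd_dvd_right (v 0) (v 1)
  obtain ⟨a, b, hab⟩ := IsBezout.gcd_eq_sum (v 0) (v 1)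
  set g := IsBezout.gcd (v 0) (v 1)
  have hvg : v = g • ![p, q] := by
    ext i
    fin_cases i
    exacts [hp, hq]
  have hg : g ≠ 0 := by
    intro hg
    exact hv (by rw [hvg, hg, zero_smul])
  have hpq : a * p + b * q = 1 := by
    apply mul_left_cancel₀ hg
    linear_combination hab - a * hp - b * hq
  exact ⟨g, ![p, q], hg, ⟨a, b, hpq⟩, hvg⟩

theorem exists_conj_eq_unipotent_of_trace_eq_two {A : SL(2, R)}
    (hA : (A : Matrix (Fin 2) (Fin 2) R).trace = 2) :
    ∃ (α : R) (B : SL(2, R)),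
      ((B⁻¹ * A * B : SL(2, R)) : Matrix (Fin 2) (Fin 2) R) = !![1, α; 0, 1] := by
  have hdet : ((A : Matrix (Fin 2) (Fin 2) R) - 1).det = 0 := by
    rw [det_sub_one_fin_two, A.det_coe, hA]
    ring
  obtain ⟨v, hv, hAv⟩ := exists_mulVec_eq_zero_iff.2 hdet
  obtain ⟨g, w, hg, hw, rfl⟩ := exists_eq_smul_isCoprime hv
  rw [mulVec_smul] at hAv
  have hAw : ((A : Matrix (Fin 2) (Fin 2) R) - 1) *ᵥ w = 0 :=
    (smul_eq_zero.1 hAv).resolve_left hg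
  rw [sub_mulVec, one_mulVec, sub_eq_zero] at hAw
  exact exists_conj_eq_unipotent_of_mulVec_eq hw hAw

end Bezout

section LinearOrder

variable {R : Type*} [CommRing R] [LinearOrder R] [IsStrictOrderedRing R]
  {M : Matrix (Fin 2) (Fin 2) R}

theorem two_mul_abs_trace_pow_le (hdet : M.det = 1) (htrace : 3 ≤ |M.trace|) {n : ℕ}
    (hn : |(M ^ n).trace| ≤ |(M ^ (n + 1)).trace|) :
    2 * |(M ^ (n + 1)).trace| ≤ |(M ^ (n + 2)).trace| :=
  calc 2 * |(M ^ (n + 1)).trace|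
    _ ≤ |M.trace| * |(M ^ (n + 1)).trace| - |(M ^ n).trace| := by
        linarith [mul_le_mul_of_nonneg_right htrace (abs_nonneg (M ^ (n + 1)).trace)]
    _ ≤ |M.trace * (M ^ (n + 1)).trace - (M ^ n).trace| := by
        rw [← abs_mul]
        exact abs_sub_abs_le_abs_sub _ _
    _ = |(M ^ (n + 2)).trace| := by rw [trace_pow_add_two_fin_two, hdet, one_mul]

theorem monotone_abs_trace_pow (hdet : M.det = 1) (htrace : 3 ≤ |M.trace|) :
    Monotone fun n : ℕ ↦ |(M ^ n).trace| := by
  refine monotone_nat_of_le_succ fun n ↦ ?_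
  induction n with
  | zero =>
    have h₀ : |(M ^ 0).trace| = 2 := by simp
    rw [h₀, zero_add, pow_one]
    linarith
  | succ n ih =>
    linarith [two_mul_abs_trace_pow_le hdet htrace ih, abs_nonneg (M ^ (n + 1)).trace]

theorem two_pow_le_abs_trace_pow (hdet : M.det = 1) (htrace : 3 ≤ |M.trace|) (n : ℕ) :
    2 ^ n ≤ |(M ^ n).trace| := by
  induction n using Nat.twoStepInduction with
  | zero => simp
  | one =>
    rw [pow_one, pow_one]
    linarith
  | more n _ ih =>
    calc (2 : R) ^ (n + 2) = 2 * 2 ^ (n + 1) := pow_succ' 2 (n + 1)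
      _ ≤ 2 * |(M ^ (n + 1)).trace| := by gcongr
      _ ≤ |(M ^ (n + 2)).trace| :=
        two_mul_abs_trace_pow_le hdet htrace (monotone_abs_trace_pow hdet htrace n.le_succ)

end LinearOrder

section Int

theorem eventually_const_mul_pow_lt_two_pow (C : ℤ) (d : ℕ) :
    ∀ᶠ n : ℕ in atTop, C * (n : ℤ) ^ d < 2 ^ n := by
  have hlittle := (isLittleO_pow_const_const_pow_of_one_lt (R := ℝ) d one_lt_two).const_mul_left C
  have hpos : ∀ᶠ n : ℕ in atTop, 0 < ‖(2 : ℝ) ^ n‖ := .of_forall fun n ↦ by simp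
  filter_upwards [hlittle.eventuallyLT_norm_of_eventually_pos hpos] with n hn
  have hlt : (C : ℝ) * (n : ℝ) ^ d < 2 ^ n := by
    simpa using (le_abs_self _).trans_lt hn
  exact_mod_cast hlt

variable {M : Matrix (Fin 2) (Fin 2) ℤ}

theorem abs_trace_le_two_of_polynomial_growth (hdet : M.det = 1) {C : ℤ} {d : ℕ}
    (hM : ∀ n : ℕ, 1 ≤ n → ∀ i, |(M ^ n) i i| ≤ C * n ^ d) : |M.trace| ≤ 2 := by
  by_contra! htrace
  obtain ⟨n, hlt, hn⟩ :=
    ((eventually_const_mul_pow_lt_two_pow (2 * C) d).and (eventually_ge_atTop 1)).exists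
  refine hlt.not_ge ?_
  calc (2 : ℤ) ^ n ≤ |(M ^ n).trace| := two_pow_le_abs_trace_pow hdet htrace n
    _ ≤ |(M ^ n) 0 0| + |(M ^ n) 1 1| := by
        rw [trace_fin_two]
        exact abs_add_le _ _
    _ ≤ 2 * C * n ^ d := by linarith [hM n hn 0, hM n hn 1]

-- The exponent 12 is the lcm of the orders 1, 2, 3, 4, 6 of the torsion elements of `SL(2, ℤ)`.
theorem trace_pow_twelve_eq_two (hdet : M.det = 1) (htrace : |M.trace| ≤ 2) :
    (M ^ 12).trace = 2 := by
  obtain ⟨hlower, hupper⟩ := abs_le.1 htrace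
  have hrec (n : ℕ) : (M ^ (n + 2)).trace = M.trace * (M ^ (n + 1)).trace - (M ^ n).trace := by
    rw [trace_pow_add_two_fin_two, hdet, one_mul]
  have h₀ : (M ^ 0).trace = 2 := by simp
  have h₁ : (M ^ 1).trace = M.trace := by rw [pow_one]
  generalize M.trace = t at *
  interval_cases t <;> simp only [hrec, h₀, h₁] <;> norm_num

end Int

theorem sl2_linear_growth_conjugate_unipotent_general (A : SL(2, ℤ))
    (hA : ∃ (C : ℤ) (d : ℕ), ∀ n : ℕ, 1 ≤ n → ∀ i j,
      |((A ^ n : SL(2, ℤ)) : Matrix (Fin 2) (Fin 2) ℤ) i j| ≤ C * n ^ d) :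
    ∃ (α : ℤ) (B : SL(2, ℤ)),
      ((B⁻¹ * A ^ 12 * B : SL(2, ℤ)) : Matrix (Fin 2) (Fin 2) ℤ) = !![1, α; 0, 1] := by
  obtain ⟨C, d, hgrowth⟩ := hA
  simp only [Matrix.SpecialLinearGroup.coe_pow] at hgrowth
  have htrace : |(A : Matrix (Fin 2) (Fin 2) ℤ).trace| ≤ 2 :=
    abs_trace_le_two_of_polynomial_growth A.det_coe fun n hn i ↦ hgrowth n hn i i
  apply exists_conj_eq_unipotent_of_trace_eq_two
  rw [Matrix.SpecialLinearGroup.coe_pow, trace_pow_twelve_eq_two A.det_coe htrace]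

/-- If `A ∈ SL(2,ℤ)` has at most linear growth, i.e. there is `C > 0` with every entry of
`Aⁿ` of absolute value at most `C·n` for all `n ≥ 1`, then some positive power `Aᵏ` is
conjugate in `SL(2,ℤ)` to the matrix `!![1, α; 0, 1]` for some integer `α`. -/
theorem sl2_linear_growth_conjugate_unipotent
    (A : Matrix.SpecialLinearGroup (Fin 2) ℤ)
    (hC : ∃ C : ℤ, 0 < C ∧ ∀ n : ℕ, 1 ≤ n → ∀ i j : Fin 2,
      |((A ^ n : Matrix.SpecialLinearGroup (Fin 2) ℤ) : Matrix (Fin 2) (Fin 2) ℤ) i j| ≤ C * n) :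
    ∃ (k : ℕ) (α : ℤ) (B : Matrix.SpecialLinearGroup (Fin 2) ℤ), 0 < k ∧
      ((B⁻¹ * A ^ k * B : Matrix.SpecialLinearGroup (Fin 2) ℤ) : Matrix (Fin 2) (Fin 2) ℤ) =
        !![1, α; 0, 1] := by
  obtain ⟨C, -, hA⟩ := hC
  obtain ⟨α, B, hB⟩ := sl2_linear_growth_conjugate_unipotent_general A ⟨C, 1, by simpa using hA⟩
  exact ⟨12, α, B, by norm_num, hB⟩
end

section
/- Let G be a group, Ψ an automorphism of G, and n a positive integer. Let π : G ⋊_Ψ ℤ → ℤ/nℤ be the group homomorphism obtained by composing the projection G ⋊_Ψ ℤ → ℤ (which kills G) with the reduction ℤ → ℤ/nℤ. Then the kernel of π is a subgroup of index n in G ⋊_Ψ ℤ, and this kernel is isomorphic as a group to the mapping torus M_{Ψⁿ} = G ⋊_{Ψⁿ} ℤ. -/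
/-!
The multiples of `n` in `ℤ` are both the kernel of reduction modulo `n` and the image of the
embedding `k ↦ n k`. Pulling back along the projection `M_Ψ → ℤ`, the kernel of `π` is the preimage
of this image, hence the semidirect product whose action is restricted along `k ↦ n k`; in that
action the generator of `ℤ` acts by `Ψⁿ`.
-/

/-- The algebraic mapping torus `M_Ψ = G ⋊_Ψ ℤ` of a group `G` with automorphism `Ψ`. -/
abbrev MappingTorus {G : Type*} [Group G] (Ψ : MulAut G) :=
  SemidirectProduct G (Multiplicative ℤ) (zpowersHom (MulAut G) Ψ)

section BaseChange

variable {N G H : Type*} [Group N] [Group G] [Group H] (φ : G →* MulAut N)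

/-- The base change `N ⋊ H → N ⋊ G` of a semidirect product along `α : H → G`, where `H` acts on
`N` through `α`. It identifies `N ⋊ H` with the fibre product of `N ⋊ G` and `H` over `G`. -/
def semidirectBaseChange (α : H →* G) :
    SemidirectProduct N H (φ.comp α) →* SemidirectProduct N G φ :=
  SemidirectProduct.map (MonoidHom.id N) α fun _ ↦ rfl

theorem semidirectBaseChange_injective {α : H →* G} (hα : Function.Injective α) :
    Function.Injective (semidirectBaseChange φ α) := by
  intro x y h
  obtain ⟨hleft, hright⟩ := SemidirectProduct.ext_iff.mp h
  exact SemidirectProduct.ext hleft (hα hright)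

theorem range_semidirectBaseChange (α : H →* G) :
    (semidirectBaseChange φ α).range = α.range.comap SemidirectProduct.rightHom := by
  ext x
  constructor
  · rintro ⟨y, rfl⟩
    exact ⟨y.right, rfl⟩
  · rintro ⟨h, hh⟩
    exact ⟨⟨x.left, h⟩, SemidirectProduct.ext rfl hh⟩

/-- An injective base change is an isomorphism onto the preimage of `α.range`: a subgroup of
`N ⋊ G` that contains `N` is again a semidirect product. -/
noncomputable def semidirectBaseChangeEquiv {α : H →* G} (hα : Function.Injective α) :
    SemidirectProduct N H (φ.comp α) ≃*
      α.range.comap (SemidirectProduct.rightHom : SemidirectProduct N G φ →* G) :=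
  (MonoidHom.ofInjective (semidirectBaseChange_injective φ hα)).trans
    (MulEquiv.subgroupCongr (range_semidirectBaseChange φ α))

end BaseChange

theorem zpowersHom_comp_powMonoidHom {G : Type*} [Group G] (g : G) (n : ℕ) :
    (zpowersHom G g).comp (powMonoidHom n) = zpowersHom G (g ^ n) := by
  ext
  simp [zpowersHom_apply]

/-- The mapping torus `M_{Ψⁿ}` as the subgroup of `M_Ψ` of elements whose exponent of `t` is a
multiple of `n`. The range of `powMonoidHom n` is `nℤ`, as `ℤ` is written multiplicatively. -/
noncomputable def mappingTorusPowEquiv {G : Type*} [Group G] (Ψ : MulAut G) {n : ℕ} (hn : n ≠ 0) :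
    MappingTorus (Ψ ^ n) ≃*
      (powMonoidHom n : Multiplicative ℤ →* Multiplicative ℤ).range.comap
        (SemidirectProduct.rightHom : MappingTorus Ψ →* Multiplicative ℤ) :=
  let φ := zpowersHom (MulAut G) Ψ
  have hact (k : Multiplicative ℤ) :
      zpowersHom (MulAut G) (Ψ ^ n) k = φ.comp (powMonoidHom n) k := by
    rw [zpowersHom_comp_powMonoidHom]
  let restrictAction : MappingTorus (Ψ ^ n) ≃*
      SemidirectProduct G (Multiplicative ℤ) (φ.comp (powMonoidHom n)) :=
    SemidirectProduct.congr (.refl G) (.refl (Multiplicative ℤ)) hact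
  restrictAction.trans (semidirectBaseChangeEquiv φ (pow_left_injective hn))

theorem ker_toMultiplicative_intCastAddHom_zmod (n : ℕ) :
    (AddMonoidHom.toMultiplicative (Int.castAddHom (ZMod n))).ker =
      (powMonoidHom n : Multiplicative ℤ →* Multiplicative ℤ).range := by
  ext k
  calc
    k ∈ (AddMonoidHom.toMultiplicative (Int.castAddHom (ZMod n))).ker
    _ ↔ ((k.toAdd : ℤ) : ZMod n) = 0 := Iff.rfl
    _ ↔ (n : ℤ) ∣ k.toAdd := ZMod.intCast_zmod_eq_zero_iff_dvd _ n
    _ ↔ k ∈ (powMonoidHom n).range := by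
      simp [dvd_def, MonoidHom.mem_range, Multiplicative.ext_iff, eq_comm]

theorem index_ker_toMultiplicative_intCastAddHom_zmod (n : ℕ) :
    (AddMonoidHom.toMultiplicative (Int.castAddHom (ZMod n))).ker.index = n := by
  have hsurj : Function.Surjective (AddMonoidHom.toMultiplicative (Int.castAddHom (ZMod n))) :=
    ZMod.intCast_surjective
  rw [Subgroup.index_ker, MonoidHom.range_eq_top.mpr hsurj, Subgroup.card_top]
  exact Nat.card_zmod n

/-- The composite `π : M_Ψ → ℤ → ℤ/nℤ` killing `G` has kernel of index `n`, and this
kernel is isomorphic to the mapping torus `M_{Ψⁿ}`. -/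
theorem mappingTorus_power_is_finite_index_kernel {G : Type*} [Group G]
    (Ψ : MulAut G) (n : ℕ) (hn : 0 < n)
    (π : MappingTorus Ψ →* Multiplicative (ZMod n))
    (hπ : π = (AddMonoidHom.toMultiplicative (Int.castAddHom (ZMod n))).comp
      SemidirectProduct.rightHom) :
    π.ker.index = n ∧ Nonempty (π.ker ≃* MappingTorus (Ψ ^ n)) := by
  rw [hπ, ← MonoidHom.comap_ker]
  constructor
  · rw [Subgroup.index_comap_of_surjective _ SemidirectProduct.rightHom_surjective]
    exact index_ker_toMultiplicative_intCastAddHom_zmod n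
  · rw [ker_toMultiplicative_intCastAddHom_zmod]
    exact ⟨(mappingTorusPowEquiv Ψ hn.ne').symm⟩
end

section
/- Let k, l ≥ 2 and let Ψ be an automorphism of the direct product F_k × F_l of free groups of ranks k and l. Then there exist an automorphism φ₁ of F_k, an automorphism φ₂ of F_l, and an element g ∈ F_k × F_l such that Ψ²(x) = g⁻¹·(φ₁ × φ₂)(x)·g for all x ∈ F_k × F_l, where (φ₁ × φ₂)(u, v) = (φ₁(u), φ₂(v)). That is, the class of Ψ² in Out(F_k × F_l) is represented by a product automorphism φ₁ × φ₂. -/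
/-!
Composing `Ψ` with a coordinate projection makes a free group of rank at least two a homomorphic
image of `F_k × F_l`, hence generated by the commuting images of the two factors. In a free group,
commutation is a transitive relation on nontrivial elements, because the centralizer of a nontrivial
element is a free group with nontrivial center. If both images were nontrivial, each of them, and
hence the whole group, would therefore be commutative. So each coordinate of `Ψ` kills one of the
factors, which means that `Ψ` preserves or swaps the two factors, and `Ψ²` preserves them. The
element `g` can be taken to be `1`.
-/

open scoped Pointwise

section CentrallyIndecomposable

variable {G P : Type*} [Group G] [Group P]

/-- A group is centrally indecomposable if it is not the central product of two nontrivial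
subgroups, that is, if it is not generated by two nontrivial subgroups commuting with each other.
The subgroups may intersect, so a nontrivial centrally indecomposable group is centerless. The
trivial group is included. -/
def IsCentrallyIndecomposable (G : Type*) [Group G] : Prop :=
  ∀ ⦃K L : Subgroup G⦄, K ≤ Subgroup.centralizer L → K ⊔ L = ⊤ → K = ⊥ ∨ L = ⊥

theorem IsCentrallyIndecomposable.le_ker_or_le_ker (hG : IsCentrallyIndecomposable G)
    {f : P →* G} (hf : Function.Surjective f) {K L : Subgroup P}
    (hcomm : K ≤ Subgroup.centralizer L) (hsup : K ⊔ L = ⊤) : K ≤ f.ker ∨ L ≤ f.ker := by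
  have hcomm_map : K.map f ≤ Subgroup.centralizer (L.map f) :=
    (Subgroup.map_mono hcomm).trans (Subgroup.map_centralizer_le_centralizer_image _ f)
  have hsup_map : K.map f ⊔ L.map f = ⊤ := by
    rw [← Subgroup.map_sup, hsup, Subgroup.map_top_of_surjective f hf]
  simpa only [Subgroup.map_eq_bot_iff] using hG hcomm_map hsup_map

/-- A group is commutative transitive if commutation is a transitive relation on its nontrivial
elements. -/
def IsCommTransitive (G : Type*) [Group G] : Prop :=
  ∀ ⦃x y z : G⦄, y ≠ 1 → Commute x y → Commute y z → Commute x z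

theorem IsCommTransitive.le_centralizer_self (hG : IsCommTransitive G) {K L : Subgroup G}
    (hcomm : K ≤ Subgroup.centralizer L) (hL : L ≠ ⊥) : K ≤ Subgroup.centralizer K := by
  obtain ⟨y, hyL, hy⟩ := L.bot_or_exists_ne_one.resolve_left hL
  have commute_y {x : G} (hx : x ∈ K) : Commute y x :=
    Subgroup.mem_centralizer_iff.1 (hcomm hx) y hyL
  exact fun x hx ↦ Subgroup.mem_centralizer_iff.2 fun z hz ↦
    hG hy (commute_y hz).symm (commute_y hx)

theorem IsCommTransitive.isCentrallyIndecomposable (hG : IsCommTransitive G)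
    (hcenter : Subgroup.center G ≠ ⊤) : IsCentrallyIndecomposable G := by
  intro K L hcomm hsup
  by_contra! ⟨hK, hL⟩
  have hcomm' : L ≤ Subgroup.centralizer K := Subgroup.le_centralizer_iff.1 hcomm
  have hK_center : K ≤ Subgroup.center G := by
    rw [← Subgroup.centralizer_univ, ← Subgroup.coe_top, Subgroup.le_centralizer_iff, ← hsup]
    exact sup_le (hG.le_centralizer_self hcomm hL) hcomm'
  have hL_center : L ≤ Subgroup.center G := by
    rw [← Subgroup.centralizer_univ, ← Subgroup.coe_top, Subgroup.le_centralizer_iff, ← hsup]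
    exact sup_le hcomm (hG.le_centralizer_self hcomm' hK)
  exact hcenter (top_le_iff.1 (hsup ▸ sup_le hK_center hL_center))

end CentrallyIndecomposable

section FreeGroup

theorem center_freeGroup_eq_bot (X : Type*) [Nontrivial X] : Subgroup.center (FreeGroup X) = ⊥ := by
  classical
  refine (Subgroup.eq_bot_iff_forall _).2 fun z hz ↦ ?_
  by_contra hne
  obtain ⟨⟨a, ε⟩, L, hL⟩ := List.exists_cons_of_ne_nil (mt FreeGroup.toWord_eq_nil_iff.1 hne)
  -- No cancellation occurs in `c * z`, so `c * z = z * c` forces the word of `z` to begin with `c`.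
  obtain ⟨c, hc⟩ := exists_ne a
  have word_left : (FreeGroup.of c * z).toWord = (c, true) :: z.toWord := by
    rw [FreeGroup.toWord_mul, FreeGroup.toWord_of, List.singleton_append, FreeGroup.reduce.cons,
      FreeGroup.reduce_toWord, hL]
    simp [hc]
  have word_right : (FreeGroup.of c * z).toWord.Sublist (z.toWord ++ [(c, true)]) := by
    rw [Subgroup.mem_center_iff.1 hz, ← FreeGroup.toWord_of]
    exact FreeGroup.toWord_mul_sublist _ _
  have hcons : (c, true) :: z.toWord = z.toWord ++ [(c, true)] :=
    (word_left ▸ word_right).eq_of_length (by simp)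
  rw [hL, List.cons_append, List.cons.injEq, Prod.mk.injEq] at hcons
  exact hc hcons.1.1

theorem center_freeGroup_eq_top (X : Type*) [Subsingleton X] :
    Subgroup.center (FreeGroup X) = ⊤ := by
  rcases isEmpty_or_nonempty X with _ | ⟨⟨x⟩⟩
  · exact Subsingleton.elim _ _
  · have : Unique X := uniqueOfSubsingleton x
    exact Subgroup.center_eq_top

theorem center_eq_bot_or_eq_top_of_isFreeGroup (G : Type*) [Group G] [IsFreeGroup G] :
    Subgroup.center G = ⊥ ∨ Subgroup.center G = ⊤ := by
  let e := IsFreeGroup.toFreeGroup G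
  have hcomap : Subgroup.center G = (Subgroup.center (FreeGroup _)).comap e.toMonoidHom :=
    Subgroup.ext fun _ ↦ (MulEquivClass.apply_mem_center_iff e).symm
  rcases subsingleton_or_nontrivial (IsFreeGroup.Generators G) with _ | _
  · exact .inr (by rw [hcomap, center_freeGroup_eq_top, Subgroup.comap_top])
  · left
    rw [hcomap, center_freeGroup_eq_bot, MonoidHom.comap_bot]
    exact (MonoidHom.ker_eq_bot_iff _).2 e.injective

theorem isCommTransitive_of_isFreeGroup (G : Type*) [Group G] [IsFreeGroup G] :
    IsCommTransitive G := by
  intro x y z hy hxy hyz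
  let C := Subgroup.centralizer {y}
  let xC : C := ⟨x, Subgroup.mem_centralizer_singleton_iff.2 hxy⟩
  let yC : C := ⟨y, Subgroup.mem_centralizer_singleton_iff.2 rfl⟩
  let zC : C := ⟨z, Subgroup.mem_centralizer_singleton_iff.2 hyz.symm⟩
  have hyC : yC ∈ Subgroup.center C := Subgroup.mem_center_iff.2 fun w ↦
    Subtype.ext (Subgroup.mem_centralizer_singleton_iff.1 w.2)
  have hC : Subgroup.center C = ⊤ := (center_eq_bot_or_eq_top_of_isFreeGroup C).resolve_left
    fun hbot ↦ hy (OneMemClass.coe_eq_one.2 (Subgroup.mem_bot.1 (hbot ▸ hyC)))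
  have hzC : zC ∈ Subgroup.center C := hC ▸ Subgroup.mem_top zC
  exact congrArg Subtype.val (Subgroup.mem_center_iff.1 hzC xC)

theorem isCentrallyIndecomposable_freeGroup (X : Type*) [Nontrivial X] :
    IsCentrallyIndecomposable (FreeGroup X) := by
  refine (isCommTransitive_of_isFreeGroup _).isCentrallyIndecomposable ?_
  rw [center_freeGroup_eq_bot]
  exact bot_ne_top

end FreeGroup

section Complements

variable {P : Type*} [Group P] {A B : Subgroup P} {Φ : MulAut P}

theorem smul_le_of_isCompl_of_smul_le (hAB : IsCompl A B) (hA : Φ • A ≤ A) (hB : Φ • A ≤ B) :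
    Φ • B ≤ B := by
  have hsmul : Φ • A = Φ • ⊥ :=
    (le_bot_iff.1 (hAB.inf_eq_bot ▸ le_inf hA hB)).trans (Subgroup.smul_bot Φ).symm
  have hAbot : A = ⊥ := MulAction.injective Φ hsmul
  have hBtop : B = ⊤ := eq_top_of_bot_isCompl (hAbot ▸ hAB)
  exact hBtop ▸ le_top

theorem sq_smul_le_of_smul_le (hAB : Φ • A ≤ B) (hBA : Φ • B ≤ A) : Φ ^ 2 • A ≤ A := by
  rw [sq, mul_smul]
  exact (Subgroup.pointwise_smul_le_pointwise_smul_iff.2 hAB).trans hBA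

end Complements

section Product

variable {G H : Type*} [Group G] [Group H]

theorem ker_fst_le_centralizer_ker_snd :
    (MonoidHom.fst G H).ker ≤ Subgroup.centralizer (MonoidHom.snd G H).ker := by
  rintro ⟨_, v⟩ rfl
  exact Subgroup.mem_centralizer_iff.2 fun ⟨u, _⟩ hu ↦ by
    obtain rfl := MonoidHom.mem_ker.1 hu
    exact Prod.commute_iff.2 ⟨Commute.one_right u, Commute.one_left v⟩

theorem isCompl_ker_fst_ker_snd : IsCompl (MonoidHom.fst G H).ker (MonoidHom.snd G H).ker := by
  refine .of_le (fun x hx ↦ Prod.ext hx.1 hx.2) fun x _ ↦ ?_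
  rw [← x.fst_mul_snd]
  exact mul_mem (Subgroup.mem_sup_right rfl) (Subgroup.mem_sup_left rfl)

theorem smul_ker_fst_le_or_smul_ker_snd_le {G₁ : Type*} [Group G₁]
    (hG : IsCentrallyIndecomposable G₁) {f : G × H →* G₁} (hf : Function.Surjective f)
    (Φ : MulAut (G × H)) :
    Φ • (MonoidHom.fst G H).ker ≤ f.ker ∨ Φ • (MonoidHom.snd G H).ker ≤ f.ker := by
  have hker := hG.le_ker_or_le_ker (f := f.comp Φ.toMonoidHom) (hf.comp Φ.surjective)
    ker_fst_le_centralizer_ker_snd isCompl_ker_fst_ker_snd.sup_eq_top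
  rw [← MonoidHom.comap_ker] at hker
  exact hker.imp Subgroup.map_le_iff_le_comap.2 Subgroup.map_le_iff_le_comap.2

theorem preserves_or_swaps_ker_fst_ker_snd (hG : IsCentrallyIndecomposable G)
    (hH : IsCentrallyIndecomposable H) (Φ : MulAut (G × H)) :
    (Φ • (MonoidHom.fst G H).ker ≤ (MonoidHom.fst G H).ker ∧
      Φ • (MonoidHom.snd G H).ker ≤ (MonoidHom.snd G H).ker) ∨
    (Φ • (MonoidHom.fst G H).ker ≤ (MonoidHom.snd G H).ker ∧
      Φ • (MonoidHom.snd G H).ker ≤ (MonoidHom.fst G H).ker) := by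
  have hcompl := isCompl_ker_fst_ker_snd (G := G) (H := H)
  rcases smul_ker_fst_le_or_smul_ker_snd_le hG (f := MonoidHom.fst G H) Prod.fst_surjective Φ
    with hfst | hfst <;>
  rcases smul_ker_fst_le_or_smul_ker_snd_le hH (f := MonoidHom.snd G H) Prod.snd_surjective Φ
    with hsnd | hsnd
  · exact .inl ⟨hfst, smul_le_of_isCompl_of_smul_le hcompl hfst hsnd⟩
  · exact .inl ⟨hfst, hsnd⟩
  · exact .inr ⟨hsnd, hfst⟩
  · exact .inl ⟨smul_le_of_isCompl_of_smul_le hcompl.symm hsnd hfst, hsnd⟩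

theorem exists_eq_prodCongr {Φ : MulAut (G × H)}
    (hfst : Φ • (MonoidHom.fst G H).ker ≤ (MonoidHom.fst G H).ker)
    (hsnd : Φ • (MonoidHom.snd G H).ker ≤ (MonoidHom.snd G H).ker) :
    ∃ (φ₁ : MulAut G) (φ₂ : MulAut H), Φ = φ₁.prodCongr φ₂ := by
  let f : G →* G := (MonoidHom.fst G H).comp (Φ.toMonoidHom.comp (MonoidHom.inl G H))
  let g : H →* H := (MonoidHom.snd G H).comp (Φ.toMonoidHom.comp (MonoidHom.inr G H))
  have hright (v : H) : (Φ (1, v)).1 = 1 :=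
    hfst (Subgroup.smul_mem_pointwise_smul (1, v) Φ _ rfl)
  have hleft (u : G) : (Φ (u, 1)).2 = 1 :=
    hsnd (Subgroup.smul_mem_pointwise_smul (u, 1) Φ _ rfl)
  have hΦ : ⇑Φ = Prod.map f g := by
    funext ⟨u, v⟩
    calc Φ (u, v) = Φ (u, 1) * Φ (1, v) := by rw [← map_mul, Prod.fst_mul_snd (u, v)]
      _ = (f u, g v) := Prod.ext (by simp [hright, f]) (by simp [hleft, g])
  obtain ⟨hf, hg⟩ := Prod.map_bijective.1 (hΦ ▸ Φ.bijective)
  exact ⟨.ofBijective f hf, .ofBijective g hg, MulEquiv.ext (congrFun hΦ)⟩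

theorem aut_sq_of_product_of_free_groups_is_product_general (hG : IsCentrallyIndecomposable G)
    (hH : IsCentrallyIndecomposable H) (Ψ : MulAut (G × H)) :
    ∃ (φ₁ : MulAut G) (φ₂ : MulAut H), Ψ ^ 2 = φ₁.prodCongr φ₂ := by
  rcases preserves_or_swaps_ker_fst_ker_snd hG hH Ψ with ⟨hfst, hsnd⟩ | ⟨hfst, hsnd⟩
  · exact exists_eq_prodCongr (sq_smul_le_of_smul_le hfst hfst) (sq_smul_le_of_smul_le hsnd hsnd)
  · exact exists_eq_prodCongr (sq_smul_le_of_smul_le hfst hsnd) (sq_smul_le_of_smul_le hsnd hfst)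

end Product

/-- For `k, l ≥ 2` and any automorphism `Ψ` of `F_k × F_l`, the class of `Ψ²` in
`Out(F_k × F_l)` is represented by a product automorphism `φ₁ × φ₂`. -/
theorem aut_sq_of_product_of_free_groups_is_product
    (k l : ℕ) (hk : 2 ≤ k) (hl : 2 ≤ l)
    (Ψ : MulAut (FreeGroup (Fin k) × FreeGroup (Fin l))) :
    ∃ (φ₁ : MulAut (FreeGroup (Fin k))) (φ₂ : MulAut (FreeGroup (Fin l)))
      (g : FreeGroup (Fin k) × FreeGroup (Fin l)),
      ∀ x : FreeGroup (Fin k) × FreeGroup (Fin l),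
        Ψ (Ψ x) = g⁻¹ * (φ₁ x.1, φ₂ x.2) * g := by
  have : Nontrivial (Fin k) := Fin.nontrivial_iff_two_le.2 hk
  have : Nontrivial (Fin l) := Fin.nontrivial_iff_two_le.2 hl
  obtain ⟨φ₁, φ₂, hΨ⟩ := aut_sq_of_product_of_free_groups_is_product_general
    (isCentrallyIndecomposable_freeGroup _) (isCentrallyIndecomposable_freeGroup _) Ψ
  refine ⟨φ₁, φ₂, 1, fun x ↦ ?_⟩
  rw [inv_one, one_mul, mul_one]
  exact DFunLike.congr_fun hΨ x
end

section
/- Let G = ℤ² * ℤ be the free product of ℤ² and ℤ, with canonical inclusions ι₁ : ℤ² → G and ι₂ : ℤ → G, and write c := ι₂(1). Let l, m be coprime integers. Suppose Φ and Φ' are automorphisms of G satisfying: Φ(ι₁(v)) = ι₁(v) and Φ'(ι₁(v)) = ι₁(v) for all v ∈ ℤ², Φ(c) = c·ι₁(l, m), and Φ'(c) = c·ι₁(1, 0). Then there exists an automorphism θ of G such that θ ∘ Φ = Φ' ∘ θ. Consequently the mapping tori G ⋊_Φ ℤ and G ⋊_{Φ'} ℤ are isomorphic. -/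
/-- The free product `ℤ² * ℤ`. -/
abbrev Z2astZ : Type := Monoid.Coprod (Multiplicative (ℤ × ℤ)) (Multiplicative ℤ)

/-- The canonical inclusion `ι₁ : ℤ² → ℤ² * ℤ`. -/
def iota1 (v : ℤ × ℤ) : Z2astZ := Monoid.Coprod.inl (Multiplicative.ofAdd v)

/-- The canonical inclusion `ι₂ : ℤ → ℤ² * ℤ`. -/
def iota2 (n : ℤ) : Z2astZ := Monoid.Coprod.inr (Multiplicative.ofAdd n)

/-- The generator `c` of the `ℤ` free factor. -/
def cGen : Z2astZ := iota2 1

/-!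
A Bézout matrix in `SL₂(ℤ)` carries `(l, m)` to `(1, 0)`. Extended by the identity on the `ℤ`
factor, it is an automorphism `θ` of `ℤ² * ℤ`. Both `θ ∘ Φ` and `Φ' ∘ θ` restrict to this matrix
on `ℤ²` and send `c` to `c·ι₁(1, 0)`, so they agree on generators.
-/

theorem mulAutCongr_eq_iff_semiconj {G H : Type*} [Group G] [Group H] {Φ : MulAut G}
    {Ψ : MulAut H} {θ : G ≃* H} : MulAut.congr θ Φ = Ψ ↔ Function.Semiconj θ Φ Ψ := by
  rw [MulEquiv.ext_iff, ← θ.forall_congr_right]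
  simp [Function.Semiconj, MulAut.congr]

theorem semiconj_mulAut_zpow {G H : Type*} [Group G] [Group H] {Φ : MulAut G} {Ψ : MulAut H}
    {θ : G ≃* H} (h : Function.Semiconj θ Φ Ψ) (n : ℤ) :
    Function.Semiconj θ ⇑(Φ ^ n) ⇑(Ψ ^ n) := by
  rw [← mulAutCongr_eq_iff_semiconj] at h ⊢
  rw [map_zpow, h]

/-- The isomorphism of mapping tori induced by an isomorphism `θ` of the base groups that
intertwines the monodromies; it sends the stable letter to the stable letter. -/
def MappingTorus.congr {G H : Type*} [Group G] [Group H] {Φ : MulAut G} {Ψ : MulAut H}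
    (θ : G ≃* H) (h : Function.Semiconj θ Φ Ψ) : MappingTorus Φ ≃* MappingTorus Ψ :=
  SemidirectProduct.congr θ (MulEquiv.refl _) fun n =>
    MulEquiv.ext (semiconj_mulAut_zpow h n.toAdd)

theorem exists_linearEquiv_apply_eq_one_zero_of_isCoprime {R : Type*} [CommRing R] {l m : R}
    (h : IsCoprime l m) : ∃ A : (R × R) ≃ₗ[R] R × R, A (l, m) = (1, 0) := by
  obtain ⟨g, hl, hm⟩ := h.exists_SL2_col 0
  let B := (LinearEquiv.finTwoArrow R R).symm ≪≫ₗ g.toLin' ≪≫ₗ LinearEquiv.finTwoArrow R R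
  have hB : B (1, 0) = (l, m) := by
    simp [B, Matrix.SpecialLinearGroup.toLin'_apply, hl, hm]
  exact ⟨B.symm, B.symm_apply_eq.mpr hB.symm⟩

section FreeProductWithInt

open Monoid.Coprod (inl inr map)

theorem coprodMap_id_comp_eq_comp_coprodMap_id {M N : Type*} [Monoid M] [Monoid N]
    (α : M →* N) {x : M}
    {Φ : Monoid.Coprod M (Multiplicative ℤ) →* Monoid.Coprod M (Multiplicative ℤ)}
    {Ψ : Monoid.Coprod N (Multiplicative ℤ) →* Monoid.Coprod N (Multiplicative ℤ)}
    (hΦ : ∀ y, Φ (inl y) = inl y) (hΨ : ∀ y, Ψ (inl y) = inl y)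
    (hcΦ : Φ (inr (.ofAdd 1)) = inr (.ofAdd 1) * inl x)
    (hcΨ : Ψ (inr (.ofAdd 1)) = inr (.ofAdd 1) * inl (α x)) :
    (map α (.id _)).comp Φ = Ψ.comp (map α (.id _)) := by
  ext
  · simp [hΦ, hΨ]
  · simp [hcΦ, hcΨ]

theorem aut_Z2astZ_coprime_conjugate_general {R : Type*} [CommRing R] {l m : R}
    (hcop : IsCoprime l m)
    {Φ Φ' : MulAut (Monoid.Coprod (Multiplicative (R × R)) (Multiplicative ℤ))}
    (hΦ : ∀ v : R × R, Φ (inl (.ofAdd v)) = inl (.ofAdd v))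
    (hΦ' : ∀ v : R × R, Φ' (inl (.ofAdd v)) = inl (.ofAdd v))
    (hc : Φ (inr (.ofAdd 1)) = inr (.ofAdd 1) * inl (.ofAdd (l, m)))
    (hc' : Φ' (inr (.ofAdd 1)) = inr (.ofAdd 1) * inl (.ofAdd (1, 0))) :
    (∃ θ : MulAut (Monoid.Coprod (Multiplicative (R × R)) (Multiplicative ℤ)),
        ∀ g, θ (Φ g) = Φ' (θ g)) ∧
      Nonempty (MappingTorus Φ ≃* MappingTorus Φ') := by
  obtain ⟨A, hA⟩ := exists_linearEquiv_apply_eq_one_zero_of_isCoprime hcop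
  let α : Multiplicative (R × R) ≃* Multiplicative (R × R) := A.toAddEquiv.toMultiplicative
  let θ := MulEquiv.coprodCongr α (.refl (Multiplicative ℤ))
  have hα : α (.ofAdd (l, m)) = .ofAdd (1, 0) := congrArg Multiplicative.ofAdd hA
  have hθ : Function.Semiconj θ Φ Φ' := DFunLike.congr_fun <|
    coprodMap_id_comp_eq_comp_coprodMap_id (Φ := Φ.toMonoidHom) (Ψ := Φ'.toMonoidHom) α.toMonoidHom
      hΦ hΦ' hc (hα ▸ hc')
  exact ⟨⟨θ, hθ⟩, ⟨MappingTorus.congr θ hθ⟩⟩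

end FreeProductWithInt

/-- If `l, m` are coprime, the automorphisms of `ℤ² * ℤ` fixing `ℤ²` pointwise and sending
`c` to `c·ι₁(l,m)` resp. `c·ι₁(1,0)` are conjugate in `Aut(ℤ² * ℤ)`; hence the corresponding
mapping tori are isomorphic. -/
theorem aut_Z2astZ_coprime_conjugate (l m : ℤ) (hcop : IsCoprime l m)
    (Φ Φ' : MulAut Z2astZ)
    (hΦ : ∀ v : ℤ × ℤ, Φ (iota1 v) = iota1 v)
    (hΦ' : ∀ v : ℤ × ℤ, Φ' (iota1 v) = iota1 v)
    (hc : Φ cGen = cGen * iota1 (l, m))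
    (hc' : Φ' cGen = cGen * iota1 (1, 0)) :
    (∃ θ : MulAut Z2astZ, ∀ g : Z2astZ, θ (Φ g) = Φ' (θ g)) ∧
      Nonempty (MappingTorus Φ ≃* MappingTorus Φ') :=
  aut_Z2astZ_coprime_conjugate_general hcop hΦ hΦ' hc hc'
end
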